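/- Let Z be a standard Borel space and let A ⊆ Z × H be a Borel set such that for every z ∈ Z the section A_z = {f ∈ H : (z,f) ∈ A} is nonempty, compact, and norm separable. Then there exists a sequence (f_n) of Borel measurable maps f_n : Z → H such that (z, f_n(z)) ∈ A for every z ∈ Z and every n ∈ ℕ, and such that for every z ∈ Z the set {f_n(z) : n ∈ ℕ} is dense in A_z with respect to the metric (f,g) ↦ ‖f−g‖_∞. -/

import Mathlib

noncomputable section

/-- `H = [-1,1]^ℕ`, the product of countably many copies of `[-1,1]`, with the
product topology (and its Borel σ-algebra). -/
abbrev H : Type := ℕ → Set.Icc (-1 : ℝ) 1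

/-- The supremum distance `‖f − g‖_∞ = sup_n |f(n) − g(n)|` on `H`. -/
noncomputable def normDist (f g : H) : ℝ := ⨆ n, |(f n : ℝ) - (g n : ℝ)|

/-- The norm diameter of `S ⊆ H`: `sup {‖f − g‖_∞ : f, g ∈ S}`. -/
noncomputable def normDiam (S : Set H) : ℝ :=
  sSup {d : ℝ | ∃ f ∈ S, ∃ g ∈ S, d = normDist f g}

/-- `S ⊆ H` is norm separable: separable w.r.t. the metric `(f,g) ↦ ‖f − g‖_∞`. -/
def NormSeparable (S : Set H) : Prop :=
  ∃ D : Set H, D.Countable ∧ D ⊆ S ∧ ∀ f ∈ S, ∀ δ : ℝ, 0 < δ → ∃ g ∈ D, normDist f g < δ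


open MeasureTheory Set Filter Topology

/-- Countable Borel separation. -/
def BSep {ι X : Type*} [MeasurableSpace X] (S : ι → Set X) : Prop :=
  ∃ B : ι → Set X, (∀ i, MeasurableSet (B i)) ∧ (∀ i, S i ⊆ B i) ∧ ⋂ i, B i = ∅

theorem sep_mono {ι X : Type*} [MeasurableSpace X] {S T : ι → Set X} (h : ∀ i, S i ⊆ T i)
    (hT : BSep T) : BSep S := by
  obtain ⟨B, h1, h2, h3⟩ := hT
  exact ⟨B, h1, fun i => (h i).trans (h2 i), h3⟩

open Classical in
theorem sep_refine {ι X : Type*} [MeasurableSpace X] (S : ι → Set X) (i : ι)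
    (S' : ℕ → Set X) (hS : S i ⊆ ⋃ j, S' j)
    (h : ∀ j, BSep (Function.update S i (S' j))) : BSep S := by
  choose B hB1 hB2 hB3 using h
  refine ⟨fun k => if k = i then ⋃ j, B j i else ⋂ j, B j k, ?_, ?_, ?_⟩
  · intro k
    dsimp only
    split_ifs
    · exact MeasurableSet.iUnion fun j => hB1 j i
    · exact MeasurableSet.iInter fun j => hB1 j k
  · intro k
    dsimp only
    split_ifs with hk
    · subst hk
      refine hS.trans (iUnion_mono fun j => ?_)
      have := hB2 j k
      simpa using this
    · refine subset_iInter fun j => ?_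
      have := hB2 j k
      simpa [hk] using this
  · rw [eq_empty_iff_forall_notMem]
    intro x hx
    rw [mem_iInter] at hx
    have hi := hx i
    simp only [if_true, mem_iUnion] at hi
    obtain ⟨j, hj⟩ := hi
    have : x ∈ ⋂ k, B j k := by
      rw [mem_iInter]
      intro k
      by_cases hk : k = i
      · subst hk; exact hj
      · have := hx k
        simp only [hk, if_false, mem_iInter] at this
        exact this j
    rw [hB3] at this
    exact this

open Classical in
theorem novikov {ι X : Type*} [Countable ι] [TopologicalSpace X] [T2Space X] [MeasurableSpace X]
    [OpensMeasurableSpace X] (S : ι → Set X) (hS : ∀ i, AnalyticSet (S i))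
    (h : ⋂ i, S i = ∅) : BSep S := by
  rcases isEmpty_or_nonempty ι with hι | hι
  · exact ⟨S, fun i => isEmptyElim i, fun i => isEmptyElim i, h⟩
  by_cases hemp : ∃ i, S i = ∅
  · obtain ⟨i, hi⟩ := hemp
    refine ⟨fun k => if k = i then ∅ else univ, ?_, ?_, ?_⟩
    · intro k; dsimp only; split_ifs <;> simp
    · intro k; dsimp only; split_ifs with hk
      · subst hk; exact hi.subset
      · simp
    · rw [eq_empty_iff_forall_notMem]
      intro x hx
      rw [mem_iInter] at hx
      simpa using hx i
  have hS' : ∀ i, ∃ f : (ℕ → ℕ) → X, Continuous f ∧ range f = S i := by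
    intro i
    have := hS i
    rw [AnalyticSet] at this
    exact this.resolve_left fun h => hemp ⟨i, h⟩
  choose φ hφ hφr using hS'
  by_contra hns
  obtain ⟨e, he⟩ := exists_surjective_nat (ι × ℕ)
  have step : ∀ (t : ℕ) (U : {U : ι → Set (ℕ → ℕ) // ¬ BSep fun i => φ i '' U i}),
      ∃ V : {U : ι → Set (ℕ → ℕ) // ¬ BSep fun i => φ i '' U i},
        (∀ i, V.1 i ⊆ U.1 i) ∧ ∃ c, ∀ x ∈ V.1 (e t).1, x (e t).2 = c := by
    rintro t ⟨U, hU⟩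
    have : ∃ c, ¬ BSep (Function.update (fun i => φ i '' U i) (e t).1
        (φ (e t).1 '' (U (e t).1 ∩ {x | x (e t).2 = c}))) := by
      by_contra hcon
      push Not at hcon
      refine hU (sep_refine _ (e t).1 _ ?_ hcon)
      rintro _ ⟨x, hx, rfl⟩
      exact mem_iUnion.2 ⟨x (e t).2, x, ⟨hx, rfl⟩, rfl⟩
    obtain ⟨c, hc⟩ := this
    refine ⟨⟨Function.update U (e t).1 (U (e t).1 ∩ {x | x (e t).2 = c}), ?_⟩, ?_, c, ?_⟩
    · intro h; apply hc
      refine sep_mono ?_ h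
      intro i
      by_cases hi : i = (e t).1
      · rw [hi]; simp
      · simp [hi]
    · intro i
      by_cases hi : i = (e t).1
      · rw [hi]; simp
      · simp [hi]
    · intro x hx
      simp only [Function.update_self] at hx
      exact hx.2
  choose nxt hn1 c hn2 using step
  let W : ℕ → {U : ι → Set (ℕ → ℕ) // ¬ BSep fun i => φ i '' U i} := fun t =>
    Nat.rec ⟨fun _ => univ, by simpa [hφr] using hns⟩ (fun t U => nxt t U) t
  have hW : ∀ t, W (t + 1) = nxt t (W t) := fun t => rfl
  have hanti : ∀ i, Antitone fun t => (W t).1 i := fun i =>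
    antitone_nat_of_succ_le fun t => by
      rw [hW]; exact hn1 t (W t) i
  choose t ht using fun p : ι × ℕ => he p
  let x : ι → ℕ → ℕ := fun i j => c (t (i, j)) (W (t (i, j)))
  have hx : ∀ i j s, t (i, j) + 1 ≤ s → ∀ y ∈ (W s).1 i, y j = x i j := by
    intro i j s hs y hy
    have h1 := hanti i hs hy
    have h2 := hn2 (t (i, j)) (W (t (i, j))) y
    simp only [ht] at h2
    exact h2 h1
  have hnb : ∀ i (O : Set (ℕ → ℕ)), IsOpen O → x i ∈ O → ∃ T, ∀ s ≥ T, (W s).1 i ⊆ O := by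
    intro i O hO hxO
    by_contra hcon
    push Not at hcon
    have : ∀ T, ∃ y ∈ (W T).1 i, y ∉ O := by
      intro T
      obtain ⟨s, hs, hs'⟩ := hcon T
      obtain ⟨y, hy, hyO⟩ := not_subset.1 hs'
      exact ⟨y, hanti i hs hy, hyO⟩
    choose y hy hyO using this
    have hlim : Tendsto y atTop (𝓝 (x i)) := by
      rw [tendsto_pi_nhds]
      intro j
      refine tendsto_const_nhds.congr' ?_
      filter_upwards [eventually_ge_atTop (t (i, j) + 1)] with s hs
      exact (hx i j s hs _ (hy s)).symm
    obtain ⟨s, hs⟩ := (hlim.eventually (hO.mem_nhds hxO)).exists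
    exact hyO s hs
  have hne : ∃ i j, φ i (x i) ≠ φ j (x j) := by
    by_contra hcon
    push Not at hcon
    obtain ⟨i0⟩ := hι
    have : φ i0 (x i0) ∈ ⋂ i, S i := by
      rw [mem_iInter]
      intro i
      rw [hcon i0 i, ← hφr]
      exact mem_range_self _
    rw [h] at this
    exact this
  obtain ⟨i, j, hij⟩ := hne
  obtain ⟨O, P, hO, hP, hxO, hxP, hd⟩ := t2_separation hij
  obtain ⟨T, hT⟩ := hnb i _ (hO.preimage (hφ i)) hxO
  obtain ⟨T', hT'⟩ := hnb j _ (hP.preimage (hφ j)) hxP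
  have hij' : i ≠ j := by rintro rfl; exact hij rfl
  refine (W (max T T')).2 ⟨fun k => if k = i then O else if k = j then P else univ, ?_, ?_, ?_⟩
  · intro k
    dsimp only
    split_ifs
    · exact hO.measurableSet
    · exact hP.measurableSet
    · exact MeasurableSet.univ
  · intro k
    dsimp only
    split_ifs with h1 h2
    · subst h1
      exact image_subset_iff.2 (hT _ (le_max_left _ _))
    · subst h2
      exact image_subset_iff.2 (hT' _ (le_max_right _ _))
    · exact subset_univ _
  · rw [eq_empty_iff_forall_notMem]
    intro y hy
    rw [mem_iInter] at hy
    have h1 := hy i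
    have h2 := hy j
    simp only [if_true, hij'.symm, if_false] at h1 h2
    exact disjoint_left.1 hd h1 h2

theorem an_inter {X : Type*} [TopologicalSpace X] [T2Space X] {s t : Set X}
    (hs : AnalyticSet s) (ht : AnalyticSet t) : AnalyticSet (s ∩ t) := by
  rw [inter_eq_iInter]
  exact AnalyticSet.iInter fun b => by cases b <;> assumption

theorem an_union {X : Type*} [TopologicalSpace X] {s t : Set X}
    (hs : AnalyticSet s) (ht : AnalyticSet t) : AnalyticSet (s ∪ t) := by
  rw [union_eq_iUnion]
  exact AnalyticSet.iUnion fun b => by cases b <;> assumption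

theorem proj_measurable {Z Y : Type*} [MeasurableSpace Z] [TopologicalSpace Z] [PolishSpace Z]
    [BorelSpace Z] [MeasurableSpace Y] [TopologicalSpace Y] [PolishSpace Y] [BorelSpace Y]
    [CompactSpace Y] (B : Set (Z × Y)) (hB : MeasurableSet B)
    (hc : ∀ z, IsClosed {y | (z, y) ∈ B}) : MeasurableSet (Prod.fst '' B) := by
  let ι := TopologicalSpace.countableBasis Y
  have hbas := TopologicalSpace.isBasis_countableBasis Y
  have : Countable ι := TopologicalSpace.countable_countableBasis Y
  have hVo : ∀ V : ι, IsOpen V.1 := fun V => hbas.isOpen V.2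
  have hVm : ∀ V : ι, MeasurableSet (Prod.snd ⁻¹' V.1 : Set (Z × Y)) := fun V =>
    measurable_snd (hVo V).measurableSet
  let Pr : ι → Set Z := fun V => Prod.fst '' (B ∩ Prod.snd ⁻¹' V.1)
  have hPr : ∀ V, AnalyticSet (Pr V) := fun V =>
    (hB.inter (hVm V)).analyticSet.image_of_continuous continuous_fst
  obtain ⟨D, hD1, hD2, hD3⟩ := novikov
    (fun V : ι => Bᶜ ∩ (Prod.fst ⁻¹' (Pr V) ∪ (Prod.snd ⁻¹' V.1 : Set (Z × Y))ᶜ))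
    (fun V => an_inter hB.compl.analyticSet
      (an_union ((hPr V).preimage continuous_fst) (hVm V).compl.analyticSet)) (by
      rw [eq_empty_iff_forall_notMem]
      rintro ⟨z, y⟩ hzy
      rw [mem_iInter] at hzy
      by_cases hB' : (z, y) ∈ B
      · obtain ⟨V, hV, -⟩ := hbas.exists_subset_of_mem_open (mem_univ y) isOpen_univ
        exact (hzy ⟨V, hV⟩).1 hB'
      obtain ⟨V, hV, hyV, hVs⟩ := hbas.exists_subset_of_mem_open
        (show y ∈ {y | (z, y) ∈ B}ᶜ from hB') (hc z).isOpen_compl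
      rcases (hzy ⟨V, hV⟩).2 with h | h
      · obtain ⟨⟨z', y'⟩, ⟨h1, h2⟩, h3⟩ := h
        dsimp at h3
        subst h3
        exact hVs h2 h1
      · exact h hyV)
  have hE : ∀ V : ι, ∃ C : Set Z, MeasurableSet C ∧ Prod.fst '' (Bᶜ \ D V) ⊆ C ∧
      Disjoint (Pr V) C := by
    intro V
    obtain ⟨C, h1, h2, h3⟩ := ((hB.compl.diff (hD1 V)).analyticSet.image_of_continuous
      continuous_fst).measurablySeparable (hPr V) (by
        rw [disjoint_left]
        rintro _ ⟨⟨z, y⟩, ⟨h1, h2⟩, rfl⟩ h3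
        exact h2 (hD2 V ⟨h1, Or.inl h3⟩))
    exact ⟨C, h3, h1, h2⟩
  choose C hC1 hC2 hC3 using hE
  have key : Prod.fst '' B = (⋃ F : {F : Finset ι // (⋃ V : ι, ⋃ _ : V ∈ F, V.1) = univ}, ⋂ V ∈ F.1, C V)ᶜ := by
    rw [eq_compl_iff_isCompl, isCompl_iff, disjoint_left, codisjoint_iff_le_sup]
    constructor
    · rintro _ ⟨⟨z, y⟩, h, rfl⟩ h'
      obtain ⟨⟨F, hF⟩, h'⟩ := mem_iUnion.1 h'
      have hy : y ∈ ⋃ V : ι, ⋃ _ : V ∈ F, V.1 := by rw [hF]; trivial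
      simp only [mem_iUnion] at hy
      obtain ⟨V, hV, hyV⟩ := hy
      simp only [mem_iInter] at h'
      exact disjoint_left.1 (hC3 V) ⟨(z, y), ⟨h, hyV⟩, rfl⟩ (h' V hV)
    · intro z _
      by_cases hz : z ∈ Prod.fst '' B
      · exact Or.inl hz
      right
      have hcov : (univ : Set Y) ⊆ ⋃ V : {V : ι // z ∈ C V}, V.1.1 := by
        intro y _
        have hzy : (z, y) ∉ B := fun h => hz ⟨_, h, rfl⟩
        have : ∃ V, (z, y) ∉ D V := by
          by_contra hcon
          push Not at hcon
          have : (z, y) ∈ ⋂ V, D V := mem_iInter.2 hcon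
          rw [hD3] at this
          exact this
        obtain ⟨V, hV⟩ := this
        refine mem_iUnion.2 ⟨⟨V, hC2 V ⟨(z, y), ⟨hzy, hV⟩, rfl⟩⟩, ?_⟩
        by_contra hyV
        exact hV (hD2 V ⟨hzy, Or.inr hyV⟩)
      obtain ⟨F, hF⟩ := isCompact_univ.elim_finite_subcover _ (fun V : {V : ι // z ∈ C V} => hVo V.1) hcov
      refine mem_iUnion.2 ⟨⟨F.map (Function.Embedding.subtype _), ?_⟩, ?_⟩
      · rw [eq_univ_iff_forall]
        intro y
        have := hF (mem_univ y)
        simp only [mem_iUnion] at this ⊢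
        obtain ⟨V, hV, hy⟩ := this
        exact ⟨V.1, Finset.mem_map.2 ⟨V, hV, rfl⟩, hy⟩
      · simp only [mem_iInter]
        intro V hV
        obtain ⟨V', _, rfl⟩ := Finset.mem_map.1 hV
        exact V'.2
  rw [key]
  refine (MeasurableSet.iUnion fun F => ?_).compl
  exact Finset.measurableSet_biInter _ fun V _ => hC1 V

theorem unif {Z Y : Type*} [MeasurableSpace Z] [TopologicalSpace Z] [PolishSpace Z]
    [BorelSpace Z] [MeasurableSpace Y] [TopologicalSpace Y] [PolishSpace Y] [BorelSpace Y]
    [CompactSpace Y] [Nonempty Y] (B : Set (Z × Y)) (hB : MeasurableSet B)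
    (hc : ∀ z, IsClosed {y | (z, y) ∈ B}) :
    MeasurableSet (Prod.fst '' B) ∧
    ∃ f : Z → Y, Measurable f ∧ ∀ z ∈ Prod.fst '' B, (z, f z) ∈ B := by
  classical
  refine ⟨proj_measurable B hB hc, ?_⟩
  let := TopologicalSpace.upgradeIsCompletelyMetrizable Y
  have : PolishSpace (ℕ → Bool) := by
    have : PolishSpace Bool := inferInstance
    infer_instance
  obtain ⟨c, hcc, hcs⟩ := exists_nat_bool_continuous_surjective_of_compact Y
  let e : (ℕ → Bool) → ℝ := fun x => (cantorSetHomeomorphNatToBool.symm x : ℝ)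
  have he : Continuous e := continuous_subtype_val.comp (Homeomorph.continuous _)
  have hei : Function.Injective e :=
    Subtype.val_injective.comp (Homeomorph.injective _)
  have hem : MeasurableEmbedding e := he.measurableEmbedding hei
  let B' : Set (Z × (ℕ → Bool)) := Prod.map id c ⁻¹' B
  have hB' : MeasurableSet B' := (measurable_id.prodMap hcc.measurable) hB
  have hc' : ∀ z, IsClosed {x | (z, x) ∈ B'} := fun z => (hc z).preimage hcc
  have hL : ∀ r, MeasurableSet (Prod.fst '' (B' ∩ Prod.snd ⁻¹' (e ⁻¹' Iic r))) := fun r =>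
    proj_measurable _ (hB'.inter (measurable_snd (hem.measurable measurableSet_Iic)))
      fun z => (hc' z).inter (isClosed_Iic.preimage he)
  have hP := proj_measurable B' hB' hc'
  have hmin : ∀ z, ∃ x, (z ∈ Prod.fst '' B' → (z, x) ∈ B' ∧ ∀ y, (z, y) ∈ B' → e x ≤ e y) ∧
      (z ∉ Prod.fst '' B' → x = fun _ => false) := by
    intro z
    by_cases hz : z ∈ Prod.fst '' B'
    · have hne : {x | (z, x) ∈ B'}.Nonempty := by
        obtain ⟨⟨z', x⟩, h, rfl⟩ := hz
        exact ⟨x, h⟩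
      obtain ⟨x, hx, hx'⟩ := (hc' z).isCompact.exists_isMinOn hne he.continuousOn
      exact ⟨x, fun _ => ⟨hx, fun y hy => hx' hy⟩, fun h => absurd hz h⟩
    · exact ⟨_, fun h => absurd h hz, fun _ => rfl⟩
  choose x hx hx' using hmin
  have hxm : Measurable x := by
    rw [← hem.measurable_comp_iff]
    refine measurable_of_Iic fun r => ?_
    have : e ∘ x ⁻¹' Iic r = (Prod.fst '' (B' ∩ Prod.snd ⁻¹' (e ⁻¹' Iic r))) ∪
        ((Prod.fst '' B')ᶜ ∩ {_z | e (fun _ => false) ≤ r}) := by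
      ext z
      by_cases hz : z ∈ Prod.fst '' B'
      · obtain ⟨h1, h2⟩ := hx z hz
        simp only [mem_preimage, Function.comp, mem_Iic, mem_union, mem_inter_iff, mem_compl_iff,
          hz, not_true, false_and, or_false]
        constructor
        · intro h
          exact ⟨(z, x z), ⟨h1, h⟩, rfl⟩
        · rintro ⟨⟨z', y⟩, ⟨h3, h4⟩, rfl⟩
          exact (h2 y h3).trans h4
      · have h1 := hx' z hz
        have h2 : z ∉ Prod.fst '' (B' ∩ Prod.snd ⁻¹' (e ⁻¹' Iic r)) := fun h =>
          hz (image_mono inter_subset_left h)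
        simp only [mem_preimage, Function.comp, mem_Iic, mem_union, mem_inter_iff, mem_compl_iff,
          hz, h2, not_false_iff, true_and, false_or, h1, mem_ofPred_eq]
    rw [this]
    exact (hL r).union (hP.compl.inter (MeasurableSet.const _))
  refine ⟨c ∘ x, hcc.measurable.comp hxm, ?_⟩
  rintro _ ⟨⟨z, y⟩, h, rfl⟩
  obtain ⟨w, rfl⟩ := hcs y
  exact (hx z ⟨(z, w), h, rfl⟩).1


/-- No two points of a section differ by more than `ε` in some coordinate. -/
def NonSplit {Z : Type} (ε : ℝ) (S : Set (Z × H)) : Prop :=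
  ∀ (z : Z) (f g : H) (n : ℕ) (p : ℚ), (z, f) ∈ S → (z, g) ∈ S → (f n : ℝ) < p → (g n : ℝ) ≤ p + ε

/-- Borel subset of `A` with closed sections that are `ε`-small. -/
def Good {Z : Type} [MeasurableSpace Z] (ε : ℝ) (A B : Set (Z × H)) : Prop :=
  MeasurableSet B ∧ B ⊆ A ∧ (∀ z, IsClosed {f : H | (z, f) ∈ B}) ∧ NonSplit ε B

/-- Countable unions of good sets. -/
def Cov {Z : Type} [MeasurableSpace Z] (ε : ℝ) (A C : Set (Z × H)) : Prop :=
  ∃ T : Set (Set (Z × H)), T.Countable ∧ (∀ B ∈ T, Good ε A B) ∧ C = ⋃₀ T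

theorem Cov.meas {Z : Type} [MeasurableSpace Z] {ε : ℝ} {A C : Set (Z × H)} (h : Cov ε A C) :
    MeasurableSet C := by
  obtain ⟨T, h1, h2, rfl⟩ := h
  exact MeasurableSet.sUnion h1 fun B hB => (h2 B hB).1

theorem Cov.union {Z : Type} [MeasurableSpace Z] {ε : ℝ} {A : Set (Z × H)} {ι : Type}
    [Countable ι] {C : ι → Set (Z × H)} (h : ∀ i, Cov ε A (C i)) : Cov ε A (⋃ i, C i) := by
  choose T h1 h2 h3 using h
  refine ⟨⋃ i, T i, countable_iUnion h1, ?_, ?_⟩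
  · intro B hB
    obtain ⟨i, hi⟩ := mem_iUnion.1 hB
    exact h2 i B hi
  · rw [sUnion_iUnion]
    exact iUnion_congr h3

theorem Good.cov {Z : Type} [MeasurableSpace Z] {ε : ℝ} {A C : Set (Z × H)} (h : Good ε A C) :
    Cov ε A C := ⟨{C}, countable_singleton _, by simpa using h, by simp⟩

theorem meas_lt {Z : Type} [MeasurableSpace Z] (n : ℕ) (r : ℝ) :
    MeasurableSet {x : Z × H | (x.2 n : ℝ) < r} :=
  measurableSet_lt (measurable_subtype_coe.comp ((measurable_pi_apply n).comp measurable_snd))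
    measurable_const

theorem meas_gt {Z : Type} [MeasurableSpace Z] (n : ℕ) (r : ℝ) :
    MeasurableSet {x : Z × H | r < (x.2 n : ℝ)} :=
  measurableSet_lt measurable_const
    (measurable_subtype_coe.comp ((measurable_pi_apply n).comp measurable_snd))

theorem small_cover {Z : Type} [MeasurableSpace Z] [TopologicalSpace Z] [PolishSpace Z]
    [BorelSpace Z] (ε : ℝ) (A S : Set (Z × H)) (hA : MeasurableSet A)
    (hc : ∀ z, IsClosed {f : H | (z, f) ∈ A}) (hS : AnalyticSet S) (hSA : S ⊆ A)
    (hns : NonSplit ε S) : ∃ B, Good ε A B ∧ S ⊆ B := by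
  have hsepar : ∀ (n : ℕ) (p : ℚ), MeasurablySeparable
      (Prod.fst '' (S ∩ {x : Z × H | (x.2 n : ℝ) < p}))
      (Prod.fst '' (S ∩ {x : Z × H | p + ε < (x.2 n : ℝ)})) := by
    intro n p
    refine AnalyticSet.measurablySeparable
      ((an_inter hS (meas_lt n _).analyticSet).image_of_continuous continuous_fst)
      ((an_inter hS (meas_gt n _).analyticSet).image_of_continuous continuous_fst) ?_
    rw [disjoint_left]
    rintro _ ⟨⟨z, f⟩, ⟨h1, h2⟩, rfl⟩ ⟨⟨z', g⟩, ⟨h3, h4⟩, h5⟩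
    dsimp at h5
    subst h5
    exact absurd (hns z' f g n p h1 h3 h2) (not_le.2 h4)
  choose C hC1 hC2 hC3 using hsepar
  refine ⟨A ∩ ⋂ (n : ℕ) (p : ℚ), ((Prod.fst ⁻¹' (C n p) ∩ {x : Z × H | p + ε < (x.2 n : ℝ)})ᶜ ∩
    ((Prod.fst ⁻¹' (C n p))ᶜ ∩ {x : Z × H | (x.2 n : ℝ) < p})ᶜ), ⟨?_, inter_subset_left, ?_, ?_⟩, ?_⟩
  · refine hA.inter (MeasurableSet.iInter fun n => MeasurableSet.iInter fun p => ?_)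
    have : MeasurableSet (Prod.fst ⁻¹' (C n p) : Set (Z × H)) := measurable_fst (hC3 n p)
    exact (this.inter (meas_gt _ _)).compl.inter (this.compl.inter (meas_lt _ _)).compl
  · intro z
    have : {f : H | (z, f) ∈ A ∩ ⋂ (n : ℕ) (p : ℚ),
        ((Prod.fst ⁻¹' (C n p) ∩ {x : Z × H | p + ε < (x.2 n : ℝ)})ᶜ ∩
        ((Prod.fst ⁻¹' (C n p))ᶜ ∩ {x : Z × H | (x.2 n : ℝ) < p})ᶜ)} =
        {f : H | (z, f) ∈ A} ∩ ⋂ (n : ℕ) (p : ℚ),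
          ({f : H | z ∈ C n p → (f n : ℝ) ≤ p + ε} ∩ {f : H | z ∉ C n p → (p : ℝ) ≤ f n}) := by
      ext f
      simp
    rw [this]
    refine (hc z).inter (isClosed_iInter fun n => isClosed_iInter fun p => ?_)
    have hcont : Continuous fun f : H => (f n : ℝ) := by fun_prop
    by_cases hz : z ∈ C n p
    · simpa [hz] using isClosed_le hcont continuous_const
    · simpa [hz] using isClosed_le continuous_const hcont
  · rintro z f g n p ⟨-, hf⟩ ⟨-, hg⟩ hfp
    simp only [mem_iInter] at hf hg
    by_contra hcon
    by_cases hz : z ∈ C n p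
    · exact (hg n p).1 ⟨hz, not_le.1 hcon⟩
    · exact (hf n p).2 ⟨hz, hfp⟩
  · intro x hx
    refine ⟨hSA hx, ?_⟩
    simp only [mem_iInter]
    intro n p
    constructor
    · rintro ⟨h1, h2⟩
      exact disjoint_left.1 (hC2 n p) ⟨x, ⟨hx, h2⟩, rfl⟩ h1
    · rintro ⟨h1, h2⟩
      exact h1 (hC1 n p ⟨x, ⟨hx, h2⟩, rfl⟩)

/-- Badness of a finite family. -/
def Bad {Z : Type} [MeasurableSpace Z] (ε : ℝ) (A : Set (Z × H)) (φ : (ℕ → ℕ) → Z × H)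
    {ι : Type} (U : ι → Set (ℕ → ℕ)) : Prop :=
  ¬ ∃ C, Cov ε A C ∧ ∀ z, ∃ s, ∀ x ∈ U s, (φ x).1 = z → φ x ∈ C

/-- The two halves of a split. -/
def child {Z : Type} (ε : ℝ) (φ : (ℕ → ℕ) → Z × H) (k : ℕ) (U : Set (ℕ → ℕ))
    (d : ℕ × ℕ × ℕ × ℚ) (b : Bool) : Set (ℕ → ℕ) :=
  if b then U ∩ {x | x k = d.2.1 ∧ (d.2.2.2 : ℝ) + ε < (φ x).2 d.2.2.1}
  else U ∩ {x | x k = d.1 ∧ ((φ x).2 d.2.2.1 : ℝ) < d.2.2.2}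

theorem bad_step {Z : Type} [MeasurableSpace Z] [TopologicalSpace Z] [PolishSpace Z]
    [BorelSpace Z] (ε : ℝ) (A : Set (Z × H)) (hA : MeasurableSet A)
    (hc : ∀ z, IsClosed {f : H | (z, f) ∈ A}) (φ : (ℕ → ℕ) → Z × H) (hφ : Continuous φ)
    (hφA : range φ ⊆ A) {ι : Type} [Finite ι] (U : ι → Set (ℕ → ℕ))
    (hU : ∀ s, MeasurableSet (U s)) (hbad : Bad ε A φ U) (k : ℕ) :
    ∃ d : ι → ℕ × ℕ × ℕ × ℚ, Bad ε A φ fun q : ι × Bool => child ε φ k (U q.1) (d q.1) q.2 := by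
  by_contra hcon
  simp only [Bad] at hcon
  push Not at hcon
  choose C0 hC0 hC0' using hcon
  apply hbad
  set C := ⋃ d, C0 d with hCdef
  have hC : Cov ε A C := Cov.union hC0
  let S : ι → Set (Z × H) := fun s => φ '' (U s) ∩ Cᶜ
  have hS : ∀ s, AnalyticSet (S s) := fun s =>
    an_inter ((hU s).analyticSet.image_of_continuous hφ) hC.meas.compl.analyticSet
  have hSA : ∀ s, S s ⊆ A := fun s => inter_subset_left.trans ((image_subset_range _ _).trans hφA)
  let E : ι → ℕ → ℚ → Set Z := fun s n p => (Prod.fst '' (S s ∩ {x : Z × H | (x.2 n : ℝ) < p})) ∩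
      (Prod.fst '' (S s ∩ {x : Z × H | p + ε < (x.2 n : ℝ)}))
  have hE : ∀ s n p, AnalyticSet (E s n p) := fun s n p => an_inter
      ((an_inter (hS s) (meas_lt n _).analyticSet).image_of_continuous continuous_fst)
      ((an_inter (hS s) (meas_gt n _).analyticSet).image_of_continuous continuous_fst)
  obtain ⟨D, hD1, hD2, hD3⟩ := novikov (fun s => ⋃ n, ⋃ p, E s n p)
    (fun s => AnalyticSet.iUnion fun n => AnalyticSet.iUnion fun p => hE s n p) (by
      rw [eq_empty_iff_forall_notMem]
      intro z hz
      simp only [mem_iInter, mem_iUnion] at hz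
      choose n p h1 h2 using hz
      simp only [mem_image] at h1 h2
      choose a ha ha' using h1
      choose b hb hb' using h2
      choose x hx hx' using fun s => (ha s).1.1
      choose y hy hy' using fun s => (hb s).1.1
      obtain ⟨⟨s, t⟩, hst⟩ := hC0' (fun s => (x s k, y s k, n s, p s)) z
      cases t
      · have := hst (x s) (by
          simp only [child]
          refine ⟨hx s, rfl, ?_⟩
          rw [hx' s]
          exact (ha s).2) (by rw [hx', ha'])
        rw [hx'] at this
        exact (ha s).1.2 (mem_iUnion.2 ⟨_, this⟩)
      · have := hst (y s) (by
          simp only [child]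
          refine ⟨hy s, rfl, ?_⟩
          rw [hy' s]
          exact (hb s).2) (by rw [hy', hb'])
        rw [hy'] at this
        exact (hb s).1.2 (mem_iUnion.2 ⟨_, this⟩))
  have hsm : ∀ s, ∃ B, Good ε A B ∧ S s ∩ Prod.fst ⁻¹' (D s)ᶜ ⊆ B := by
    intro s
    refine small_cover ε A _ hA hc
      (an_inter (hS s) (measurable_fst (β := H) (hD1 s).compl).analyticSet)
      (inter_subset_left.trans (hSA s)) ?_
    rintro z f g n p ⟨h1, h2⟩ ⟨h3, h4⟩ h5
    by_contra h6
    exact h2 (hD2 s (mem_iUnion.2 ⟨n, mem_iUnion.2 ⟨p, ⟨(z, f), ⟨h1, h5⟩, rfl⟩,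
      ⟨(z, g), ⟨h3, not_le.1 h6⟩, rfl⟩⟩⟩))
  choose B hB1 hB2 using hsm
  refine ⟨⋃ o : Option ι, o.elim C B, Cov.union ?_, ?_⟩
  · rintro (_ | s)
    · exact hC
    · exact (hB1 s).cov
  · intro z
    have : ∃ s, z ∉ D s := by
      by_contra hcon
      push Not at hcon
      have : z ∈ ⋂ s, D s := mem_iInter.2 hcon
      rw [hD3] at this
      exact this
    obtain ⟨s, hs⟩ := this
    refine ⟨s, fun x hx hxz => ?_⟩
    by_cases hxC : φ x ∈ C
    · exact mem_iUnion.2 ⟨none, hxC⟩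
    · refine mem_iUnion.2 ⟨some s, hB2 s ⟨⟨⟨x, hx, rfl⟩, hxC⟩, ?_⟩⟩
      simp only [mem_preimage, hxz]
      exact hs

theorem child_meas {Z : Type} [MeasurableSpace Z] [TopologicalSpace Z] [PolishSpace Z]
    [BorelSpace Z] (ε : ℝ) (φ : (ℕ → ℕ) → Z × H) (hφ : Continuous φ) (k : ℕ) (U : Set (ℕ → ℕ))
    (hU : MeasurableSet U) (d : ℕ × ℕ × ℕ × ℚ) (b : Bool) :
    MeasurableSet (child ε φ k U d b) := by
  have h1 : ∀ c, MeasurableSet {x : ℕ → ℕ | x k = c} := fun c =>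
    measurableSet_eq_fun (measurable_pi_apply k) measurable_const
  unfold child
  split_ifs
  · exact hU.inter ((h1 _).inter (hφ.measurable (meas_gt _ _)))
  · exact hU.inter ((h1 _).inter (hφ.measurable (meas_lt _ _)))

theorem le_normDist (f g : H) (n : ℕ) : |(f n : ℝ) - g n| ≤ normDist f g := by
  refine le_ciSup (f := fun n => |(f n : ℝ) - g n|) ⟨2, ?_⟩ n
  rintro _ ⟨m, rfl⟩
  have h1 := (f m).2
  have h2 := (g m).2
  simp only [mem_Icc] at h1 h2
  dsimp only
  rw [abs_le]
  constructor <;> linarith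

theorem exists_cov {Z : Type} [MeasurableSpace Z] [TopologicalSpace Z] [PolishSpace Z]
    [BorelSpace Z] (ε : ℝ) (hε : 0 < ε) (A : Set (Z × H)) (hA : MeasurableSet A)
    (hc : ∀ z, IsClosed {f : H | (z, f) ∈ A})
    (hsep : ∀ z : Z, NormSeparable {f : H | (z, f) ∈ A}) : Cov ε A A := by
  have hAn := hA.analyticSet
  rw [AnalyticSet] at hAn
  rcases hAn with rfl | ⟨φ, hφ, hφA⟩
  · exact ⟨∅, countable_empty, by simp, by simp⟩
  by_contra hnot
  let St : ℕ → Type := fun k =>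
    {U : (Fin k → Bool) → Set (ℕ → ℕ) // (∀ s, MeasurableSet (U s)) ∧ Bad ε A φ U}
  have step : ∀ k (U : St k), ∃ (V : St (k + 1)) (d : (Fin k → Bool) → ℕ × ℕ × ℕ × ℚ),
      ∀ s, V.1 s = child ε φ k (U.1 (Fin.init s)) (d (Fin.init s)) (s (Fin.last k)) := by
    rintro k ⟨U, hU, hb⟩
    obtain ⟨d, hd⟩ := bad_step ε A hA hc φ hφ hφA.subset U hU hb k
    refine ⟨⟨fun s => child ε φ k (U (Fin.init s)) (d (Fin.init s)) (s (Fin.last k)),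
      fun s => child_meas ε φ hφ k _ (hU _) _ _, ?_⟩, d, fun s => rfl⟩
    rintro ⟨C, h1, h2⟩
    refine hd ⟨C, h1, fun z => ?_⟩
    obtain ⟨s, hs⟩ := h2 z
    exact ⟨(Fin.init s, s (Fin.last k)), hs⟩
  choose nxt d hd using step
  have h0 : Bad ε A φ fun _ : Fin 0 → Bool => (univ : Set (ℕ → ℕ)) := by
    rintro ⟨C, h1, h2⟩
    have : C = A := by
      apply Subset.antisymm
      · obtain ⟨T, h3, h4, rfl⟩ := h1
        exact sUnion_subset fun B hB => (h4 B hB).2.1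
      · rw [← hφA]
        rintro _ ⟨x, rfl⟩
        obtain ⟨s, hs⟩ := h2 (φ x).1
        exact hs x (mem_univ _) rfl
    rw [this] at h1
    exact hnot h1
  let W : (k : ℕ) → St k := fun k =>
    Nat.rec ⟨fun _ => univ, fun _ => MeasurableSet.univ, h0⟩ (fun k U => nxt k U) k
  have hW : ∀ k, W (k + 1) = nxt k (W k) := fun k => rfl
  let res : (ℕ → Bool) → (k : ℕ) → Fin k → Bool := fun σ k i => σ i
  let Wσ : (ℕ → Bool) → ℕ → Set (ℕ → ℕ) := fun σ k => (W k).1 (res σ k)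
  let dd : (ℕ → Bool) → ℕ → ℕ × ℕ × ℕ × ℚ := fun σ k => d k (W k) (res σ k)
  have hWs : ∀ σ k, Wσ σ (k + 1) = child ε φ k (Wσ σ k) (dd σ k) (σ k) := by
    intro σ k
    exact hd k (W k) (res σ (k + 1))
  have hanti : ∀ σ, Antitone (Wσ σ) := fun σ => antitone_nat_of_succ_le fun k => by
    rw [hWs]
    unfold child
    split_ifs <;> exact inter_subset_left
  let X : (ℕ → Bool) → ℕ → ℕ := fun σ k => if σ k then (dd σ k).2.1 else (dd σ k).1
  have hX : ∀ σ k m, k + 1 ≤ m → ∀ x ∈ Wσ σ m, x k = X σ k := by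
    intro σ k m hm x hx
    have := hanti σ hm hx
    rw [hWs] at this
    unfold child at this
    simp only [X]
    split_ifs at this ⊢
    · exact this.2.1
    · exact this.2.1
  have hz : ∀ k, ∃ z, ∀ s, ∃ x ∈ (W k).1 s, (φ x).1 = z := by
    intro k
    by_contra hcon
    push Not at hcon
    refine (W k).2.2 ⟨∅, ⟨∅, countable_empty, by simp, by simp⟩, fun z => ?_⟩
    obtain ⟨s, hs⟩ := hcon z
    exact ⟨s, fun x hx hxz => absurd hxz (hs x hx)⟩
  choose z y hy hyz using hz
  have hlim : ∀ σ, Tendsto (fun k => y k (res σ k)) atTop (𝓝 (X σ)) := by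
    intro σ
    rw [tendsto_pi_nhds]
    intro j
    refine tendsto_const_nhds.congr' ?_
    filter_upwards [eventually_ge_atTop (j + 1)] with m hm
    exact (hX σ j m hm _ (hy m (res σ m))).symm
  have hlimφ : ∀ σ, Tendsto (fun k => φ (y k (res σ k))) atTop (𝓝 (φ (X σ))) := fun σ =>
    (hφ.tendsto _).comp (hlim σ)
  have hlimz : ∀ σ, Tendsto z atTop (𝓝 (φ (X σ)).1) := by
    intro σ
    refine ((continuous_fst.tendsto _).comp (hlimφ σ)).congr fun k => ?_
    exact hyz k _
  have hlimf : ∀ σ n, Tendsto (fun k => ((φ (y k (res σ k))).2 n : ℝ)) atTop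
      (𝓝 ((φ (X σ)).2 n : ℝ)) := by
    intro σ n
    have hcont : Continuous fun x : Z × H => (x.2 n : ℝ) := by fun_prop
    exact (hcont.tendsto _).comp (hlimφ σ)
  have hF : ∀ σ k, σ k = false → ((φ (X σ)).2 (dd σ k).2.2.1 : ℝ) ≤ (dd σ k).2.2.2 := by
    intro σ k hσ
    refine le_of_tendsto (hlimf σ _) ?_
    filter_upwards [eventually_ge_atTop (k + 1)] with m hm
    have := hanti σ hm (hy m (res σ m))
    rw [hWs, hσ] at this
    simp only [child] at this
    exact this.2.2.le
  have hT : ∀ σ k, σ k = true →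
      ((dd σ k).2.2.2 : ℝ) + ε ≤ ((φ (X σ)).2 (dd σ k).2.2.1 : ℝ) := by
    intro σ k hσ
    refine ge_of_tendsto (hlimf σ _) ?_
    filter_upwards [eventually_ge_atTop (k + 1)] with m hm
    have := hanti σ hm (hy m (res σ m))
    rw [hWs, hσ] at this
    simp only [child] at this
    exact this.2.2.le
  have hsplit : ∀ σ τ k, (∀ i < k, σ i = τ i) → σ k = false → τ k = true →
      ∃ n, ((φ (X σ)).2 n : ℝ) + ε ≤ (φ (X τ)).2 n := by
    intro σ τ k hlt h1 h2
    have hres : res σ k = res τ k := funext fun i => hlt i i.2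
    have hdd : dd σ k = dd τ k := by simp only [dd, hres]
    have h3 := hF σ k h1
    have h4 := hT τ k h2
    rw [← hdd] at h4
    exact ⟨_, by linarith⟩
  have hsplit2 : ∀ σ τ, σ ≠ τ → ∃ n, ε ≤ |((φ (X σ)).2 n : ℝ) - (φ (X τ)).2 n| := by
    intro σ τ hne
    have hex : ∃ k, σ k ≠ τ k := Function.ne_iff.1 hne
    classical
    have hk := Nat.find_spec hex
    have hmin : ∀ i < Nat.find hex, σ i = τ i := fun i hi => not_not.1 (Nat.find_min hex hi)
    cases h1 : σ (Nat.find hex) <;> cases h2 : τ (Nat.find hex)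
    · exact absurd (h1.trans h2.symm) hk
    · obtain ⟨n, hn⟩ := hsplit σ τ _ hmin h1 h2
      exact ⟨n, by rw [abs_sub_comm]; exact le_trans (by linarith) (le_abs_self _)⟩
    · obtain ⟨n, hn⟩ := hsplit τ σ _ (fun i hi => (hmin i hi).symm) h2 h1
      exact ⟨n, le_trans (by linarith) (le_abs_self _)⟩
    · exact absurd (h1.trans h2.symm) hk
  let σ0 : ℕ → Bool := fun _ => false
  have hmem : ∀ σ, (φ (X σ)).2 ∈ {f : H | ((φ (X σ0)).1, f) ∈ A} := by
    intro σ
    rw [tendsto_nhds_unique (hlimz σ0) (hlimz σ)]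
    exact hφA.subset (mem_range_self _)
  obtain ⟨Q, hQ1, -, hQ2⟩ := hsep (φ (X σ0)).1
  choose g hg hg' using fun σ => hQ2 _ (hmem σ) (ε / 2) (by linarith)
  have hinj : Function.Injective fun σ => (⟨g σ, hg σ⟩ : Q) := by
    intro σ τ hστ
    by_contra hne
    obtain ⟨n, hn⟩ := hsplit2 σ τ hne
    have hgg : g σ = g τ := congrArg Subtype.val hστ
    have h1 := (le_normDist _ _ n).trans_lt (hg' σ)
    have h2 := (le_normDist _ _ n).trans_lt (hg' τ)
    rw [hgg] at h1
    have h3 := abs_sub_le ((φ (X σ)).2 n : ℝ) (g τ n) ((φ (X τ)).2 n)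
    rw [abs_sub_comm] at h2
    linarith
  have : Countable Q := hQ1
  have : Countable (ℕ → Bool) := hinj.countable
  obtain ⟨u, hu⟩ := exists_surjective_nat (ℕ → Bool)
  obtain ⟨n, hn⟩ := hu fun n => !(u n n)
  have := congrFun hn n
  simp at this

theorem NonSplit.dist_le {Z : Type} {ε : ℝ} {S : Set (Z × H)} (h : NonSplit ε S) {z : Z} {f g : H}
    (hf : (z, f) ∈ S) (hg : (z, g) ∈ S) : normDist f g ≤ ε := by
  have key : ∀ f g : H, (z, f) ∈ S → (z, g) ∈ S → ∀ n, (g n : ℝ) ≤ f n + ε := by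
    intro f g hf hg n
    by_contra hcon
    obtain ⟨p, hp1, hp2⟩ := exists_rat_btwn (show (f n : ℝ) < g n - ε by linarith)
    have := h z f g n p hf hg hp1
    linarith
  refine ciSup_le fun n => abs_le.2 ⟨?_, ?_⟩
  · linarith [key f g hf hg n]
  · linarith [key g f hg hf n]

/-- **Proposition 2.** If `Z` is standard Borel and `A ⊆ Z × H` is Borel with every section
`A_z` nonempty, compact and norm separable, then there is a sequence `(f_n)` of Borel
selectors of `A` such that `(f_n(z))` is norm dense in `A_z` for every `z`. -/
theorem exists_borel_selectors_normDense (Z : Type) [MeasurableSpace Z] [StandardBorelSpace Z]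
    (A : Set (Z × H)) (hA : MeasurableSet A)
    (hne : ∀ z : Z, {f : H | (z, f) ∈ A}.Nonempty)
    (hcpt : ∀ z : Z, IsCompact {f : H | (z, f) ∈ A})
    (hsep : ∀ z : Z, NormSeparable {f : H | (z, f) ∈ A}) :
    ∃ f : ℕ → Z → H, (∀ n, Measurable (f n)) ∧
      (∀ n z, (z, f n z) ∈ A) ∧
      (∀ z g, (z, g) ∈ A → ∀ δ : ℝ, 0 < δ → ∃ n, normDist (f n z) g < δ) := by
  classical
  let := upgradeStandardBorel Z
  have hc : ∀ z, IsClosed {f : H | (z, f) ∈ A} := fun z => (hcpt z).isClosed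
  have : Nonempty H := ⟨fun _ => ⟨0, by simp⟩⟩
  obtain ⟨-, f0, hf0, hf0'⟩ := unif A hA hc
  have hf0A : ∀ z, (z, f0 z) ∈ A := fun z => hf0' z (by
    obtain ⟨f, hf⟩ := hne z
    exact ⟨(z, f), hf, rfl⟩)
  have hcov : ∀ m : ℕ, ∃ B : ℕ → Set (Z × H), (∀ n, Good (1 / ((m : ℝ) + 1)) A (B n)) ∧
      A = ⋃ n, B n := by
    intro m
    obtain ⟨T, h1, h2, h3⟩ := exists_cov (1 / ((m : ℝ) + 1)) (by positivity) A hA hc hsep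
    have hE : Good (1 / ((m : ℝ) + 1)) A ∅ :=
      ⟨MeasurableSet.empty, empty_subset _, fun z => by simp, fun z f g n p h => absurd h (by simp)⟩
    obtain ⟨B, hB⟩ := (h1.insert ∅).exists_eq_range (insert_nonempty _ _)
    refine ⟨B, fun n => ?_, ?_⟩
    · have : B n ∈ insert ∅ T := by rw [hB]; exact mem_range_self n
      rcases this with h | h
      · rw [h]; exact hE
      · exact h2 _ h
    · rw [← sUnion_range, ← hB, sUnion_insert, empty_union]
      exact h3
  choose B hB hBA using hcov
  choose hp f hf hf' using fun m n => unif (B m n) (hB m n).1 (hB m n).2.2.1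
  refine ⟨fun k => (Prod.fst '' B k.unpair.1 k.unpair.2).piecewise (f k.unpair.1 k.unpair.2) f0,
    fun k => (hf _ _).piecewise (hp _ _) hf0, ?_, ?_⟩
  · intro k z
    by_cases hz : z ∈ Prod.fst '' B k.unpair.1 k.unpair.2
    · simp only [piecewise_eq_of_mem _ _ _ hz]
      exact (hB _ _).2.1 (hf' _ _ z hz)
    · simp only [piecewise_eq_of_notMem _ _ _ hz]
      exact hf0A z
  · intro z g hg δ hδ
    obtain ⟨m, hm⟩ := exists_nat_one_div_lt hδ
    rw [hBA m] at hg
    obtain ⟨n, hn⟩ := mem_iUnion.1 hg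
    refine ⟨Nat.pair m n, ?_⟩
    have hz : z ∈ Prod.fst '' B m n := ⟨_, hn, rfl⟩
    simp only [Nat.unpair_pair]
    rw [piecewise_eq_of_mem _ _ _ hz]
    exact ((hB m n).2.2.2.dist_le (hf' m n z hz) hn).trans_lt hm
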